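/- arXiv:2010.03637 — 2 statements merged into one kernel-verified Lean document; each statement's English description precedes it below -/
import Mathlib

section
/- In the setup described in the context, there exists ρ₀ > 0, depending only on k and Λ⁺ ∪ Λ⁻, such that for every ρ ≥ ρ₀ there is a constant K > 1, depending only on k, m, ρ and Λ⁺ ∪ Λ⁻ but not on ℛ, with the following property: in every group H(ρ, ℛ), for all a, b ∈ 𝒜, every n ∈ ℕ, and every ordered word u = t₁^{n₁}⋯t_k^{n_k} with ‖θ(u)‖ < n, the word [a, a u-conjugate of b], i.e. [a, u⁻¹bu], represents 1 in H(ρ, ℛ) and has area at most Kⁿ with respect to the given presentation. -/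
open Function

/-- The length of the reduced word representing an element of a free group. -/
noncomputable def freeNorm {X : Type*} (w : FreeGroup X) : ℕ :=
  letI := Classical.decEq X
  w.toWord.length

/-- `w` equals a product of exactly `N` conjugates of elements of `R ∪ R⁻¹`. -/
def AreaIs {G : Type*} [Group G] (R : Set G) (w : G) (N : ℕ) : Prop :=
  ∃ r f : Fin N → G, (∀ i, r i ∈ R ∨ (r i)⁻¹ ∈ R) ∧
    w = (List.ofFn fun i => (f i)⁻¹ * r i * f i).prod

/-- The area of `w` with respect to the relators `R` is at most `N`. -/
def AreaLe {G : Type*} [Group G] (R : Set G) (w : G) (N : ℕ) : Prop :=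
  ∃ N' ≤ N, AreaIs R w N'

/-- `f ≼ g` : there is `C > 0` with `f n ≤ C * g (C * n) + C * n + C` for all `n`. -/
def Dominates (f g : ℕ → ℕ) : Prop :=
  ∃ C : ℕ, 0 < C ∧ ∀ n, f n ≤ C * g (C * n) + C * n + C

/-- `f ≈ g` : mutual domination. -/
def DehnEquiv (f g : ℕ → ℕ) : Prop := Dominates f g ∧ Dominates g f

/-- `δ` is the Dehn function of the presentation with relator set `R`. -/
def IsDehnFunctionOf {X : Type*} (R : Set (FreeGroup X)) (δ : ℕ → ℕ) : Prop :=
  ∀ n, IsLeast {N | ∀ w ∈ Subgroup.normalClosure R, freeNorm w ≤ n → AreaLe R w N} (δ n)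

/-- A group is metabelian if its derived subgroup is abelian. -/
def IsMetabelian (G : Type*) [Group G] : Prop :=
  ∀ a b : G, a ∈ commutator G → b ∈ commutator G → a * b = b * a

instance derivedSeriesNormalInst {G : Type*} [Group G] (n : ℕ) : (derivedSeries G n).Normal :=
  derivedSeries_normal G n

/-- The free metabelian group on `X`: the free group modulo its second derived subgroup. -/
abbrev FreeMetabelian (X : Type*) := FreeGroup X ⧸ derivedSeries (FreeGroup X) 2

/-- The word length of `w` in the free metabelian group is at most `n`. -/
def mNormLe {X : Type*} (w : FreeMetabelian X) (n : ℕ) : Prop :=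
  ∃ v : FreeGroup X, QuotientGroup.mk' (derivedSeries (FreeGroup X) 2) v = w ∧ freeNorm v ≤ n

/-- `δ` is the relative Dehn function (in the variety of metabelian groups) of the
relative presentation with relator set `R`. -/
def IsRelDehnFunctionOf {X : Type*} (R : Set (FreeMetabelian X)) (δ : ℕ → ℕ) : Prop :=
  ∀ n, IsLeast {N | ∀ w ∈ Subgroup.normalClosure R, mNormLe w n → AreaLe R w N} (δ n)

/-- The paper's commutator convention: `[x, y] = x⁻¹ * y⁻¹ * x * y`. -/
def pcomm {G : Type*} [Group G] (x y : G) : G := x⁻¹ * y⁻¹ * x * y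

/-- A group has torsion-free rank `k` if it has a finite-index subgroup isomorphic to `ℤ^k`. -/
def HasTFRank (Q : Type*) [Group Q] (k : ℕ) : Prop :=
  ∃ H : Subgroup Q, H.index ≠ 0 ∧ Nonempty (H ≃* Multiplicative (Fin k → ℤ))

/-- `G ⧸ A` is abelian and has torsion-free rank `j`. -/
def QuotientRankProp {G : Type*} [Group G] (A : Subgroup G) [A.Normal] (j : ℕ) : Prop :=
  (∀ x y : G ⧸ A, x * y = y * x) ∧ HasTFRank (G ⧸ A) j

/-- The set of torsion-free ranks of quotients `G ⧸ A` by abelian normal subgroups `A`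
with `G ⧸ A` abelian. -/
def abelianRankSet (G : Type*) [Group G] : Set ℕ :=
  {j | ∃ A : Subgroup G, ∃ h : A.Normal, (∀ x y : G, x ∈ A → y ∈ A → x * y = y * x) ∧
    @QuotientRankProp G _ A h j}

/-- The Euclidean norm of an integer vector. -/
noncomputable def normV {k : ℕ} (v : Fin k → ℤ) : ℝ :=
  Real.sqrt (∑ i, ((v i : ℝ)) ^ 2)

/-- Generator `aᵢ ∈ 𝒜`. -/
def agen {m k : ℕ} (i : Fin m) : FreeGroup (Fin m ⊕ Fin k) := FreeGroup.of (Sum.inl i)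

/-- Generator `tᵢ ∈ 𝒯`. -/
def tgen {m k : ℕ} (i : Fin k) : FreeGroup (Fin m ⊕ Fin k) := FreeGroup.of (Sum.inr i)

/-- The ordered word `u_v = t₁^{v₁}⋯t_k^{v_k}`. -/
def ow {m k : ℕ} (v : Fin k → ℤ) : FreeGroup (Fin m ⊕ Fin k) :=
  (List.ofFn fun i : Fin k => (tgen i : FreeGroup (Fin m ⊕ Fin k)) ^ (v i)).prod

/-- The relator `(∏_{v ∈ supp λ} u_v⁻¹ a^{λ(v)} u_v)·a⁻¹` for `λ ∈ Λ⁺`. -/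
noncomputable def lamWordP {m k : ℕ} (a : Fin m) (lam : (Fin k → ℤ) →₀ ℤ) :
    FreeGroup (Fin m ⊕ Fin k) :=
  ((lam.support.toList).map fun v => (ow v)⁻¹ * (agen a) ^ (lam v) * (ow v)).prod *
    (agen a)⁻¹

/-- The relator `(∏_{v ∈ supp λ} u_v a^{λ(v)} u_v⁻¹)·a⁻¹` for `λ ∈ Λ⁻`. -/
noncomputable def lamWordM {m k : ℕ} (a : Fin m) (lam : (Fin k → ℤ) →₀ ℤ) :
    FreeGroup (Fin m ⊕ Fin k) :=
  ((lam.support.toList).map fun v => (ow v) * (agen a) ^ (lam v) * (ow v)⁻¹).prod *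
    (agen a)⁻¹

/-- The relators of the group `H(ρ, ℛ)`. -/
noncomputable def HRel {m k : ℕ} (aij : Fin k → Fin k → Fin m)
    (Lp Lm : Finset ((Fin k → ℤ) →₀ ℤ)) (ρ : ℝ) (Rx : Set (FreeGroup (Fin m ⊕ Fin k))) :
    Set (FreeGroup (Fin m ⊕ Fin k)) :=
  {w | (∃ i j : Fin k, i < j ∧ w = pcomm (tgen i) (tgen j) * (agen (aij i j))⁻¹) ∨
       (∃ (a b : Fin m) (v : Fin k → ℤ), normV v < ρ ∧
         w = pcomm (agen a) ((ow v)⁻¹ * agen b * ow v)) ∨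
       (∃ a : Fin m, ∃ lam ∈ Lp, w = lamWordP a lam) ∨
       (∃ a : Fin m, ∃ lam ∈ Lm, w = lamWordM a lam) ∨
       w ∈ Rx}

/-- The tameness condition on `Λ⁺ ∪ Λ⁻` : every nonzero `x ∈ ℝ^k` pairs positively with
the whole support of some `λ ∈ Λ⁺ ∪ Λ⁻`. -/
def TameCond {k : ℕ} (Lp Lm : Finset ((Fin k → ℤ) →₀ ℤ)) : Prop :=
  ∀ x : Fin k → ℝ, x ≠ 0 → ∃ lam ∈ Lp ∪ Lm, ∀ v ∈ lam.support,
    0 < ∑ i, x i * (v i : ℝ)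

namespace CAB

inductive ArN {G : Type*} [Group G] (R : Set G) : G → ℕ → Prop
  | one : ArN R 1 0
  | step (w r f : G) (n : ℕ) (h : ArN R w n) (hr : r ∈ R ∨ r⁻¹ ∈ R) :
      ArN R (f⁻¹ * r * f * w) (n + 1)

section area
variable {G : Type*} [Group G] {R : Set G}

theorem ArN.areaIs {w : G} {n : ℕ} (h : ArN R w n) : AreaIs R w n := by
  induction h with
  | one => exact ⟨fun _ => 1, fun _ => 1, fun i => i.elim0, by simp⟩
  | step w r f n h hr ih =>
    obtain ⟨r', f', h1, h2⟩ := ih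
    refine ⟨Fin.cons r r', Fin.cons f f', ?_, ?_⟩
    · intro i
      refine Fin.cases ?_ ?_ i
      · simpa using hr
      · intro j; simpa using h1 j
    · simp [List.ofFn_succ, h2]

theorem ArN.mem {w : G} {n : ℕ} (h : ArN R w n) : w ∈ Subgroup.normalClosure R := by
  induction h with
  | one => exact one_mem _
  | step w r f n h hr ih =>
    refine mul_mem ?_ ih
    have hr' : r ∈ Subgroup.normalClosure R := by
      rcases hr with hr | hr
      · exact Subgroup.subset_normalClosure hr
      · simpa using inv_mem (Subgroup.subset_normalClosure (s := R) hr)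
    have := (Subgroup.normalClosure_normal (s := R)).conj_mem r hr' f⁻¹
    simpa using this

theorem ArN.mul {w w' : G} {n n' : ℕ} (h : ArN R w n) (h' : ArN R w' n') :
    ArN R (w * w') (n + n') := by
  induction h with
  | one => simpa using h'
  | step w r f n h hr ih =>
    have := ArN.step _ r f _ ih hr
    convert this using 1
    · simp only [mul_assoc]
    · omega

theorem ArN.single {r : G} (f : G) (hr : r ∈ R ∨ r⁻¹ ∈ R) : ArN R (f⁻¹ * r * f) 1 := by
  simpa using ArN.step _ r f _ ArN.one hr

theorem ArN.inv {w : G} {n : ℕ} (h : ArN R w n) : ArN R w⁻¹ n := by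
  induction h with
  | one => simpa using ArN.one
  | step w r f n h hr ih =>
    have h1 : ArN R (f⁻¹ * r⁻¹ * f) 1 := ArN.single f (by simpa [or_comm] using hr)
    convert ih.mul h1 using 1
    group

theorem ArN.conj {w : G} {n : ℕ} (h : ArN R w n) (g : G) : ArN R (g⁻¹ * w * g) n := by
  induction h with
  | one => simpa using ArN.one
  | step w r f n h hr ih =>
    have := ArN.step _ r (f * g) _ ih hr
    convert this using 1
    group

def Ar (R : Set G) (w : G) (c : ℝ) : Prop := ∃ n : ℕ, ArN R w n ∧ (n : ℝ) ≤ c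

theorem Ar.mono {w : G} {c d : ℝ} (h : Ar R w c) (hcd : c ≤ d) : Ar R w d :=
  let ⟨n, h1, h2⟩ := h; ⟨n, h1, h2.trans hcd⟩

theorem Ar.one {c : ℝ} (hc : 0 ≤ c) : Ar R (1 : G) c := ⟨0, ArN.one, by simpa using hc⟩

theorem Ar.mul {w w' : G} {c c' : ℝ} (h : Ar R w c) (h' : Ar R w' c') :
    Ar R (w * w') (c + c') := by
  obtain ⟨n, h1, h2⟩ := h
  obtain ⟨n', h1', h2'⟩ := h'
  exact ⟨n + n', h1.mul h1', by push_cast; linarith⟩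

theorem Ar.inv {w : G} {c : ℝ} (h : Ar R w c) : Ar R w⁻¹ c :=
  let ⟨n, h1, h2⟩ := h; ⟨n, h1.inv, h2⟩

theorem Ar.conj {w : G} {c : ℝ} (h : Ar R w c) (g : G) : Ar R (g⁻¹ * w * g) c :=
  let ⟨n, h1, h2⟩ := h; ⟨n, h1.conj g, h2⟩

theorem Ar.rel {w : G} (h : w ∈ R) : Ar R w 1 :=
  ⟨1, by simpa using ArN.single 1 (Or.inl h : w ∈ R ∨ w⁻¹ ∈ R), by simp⟩

def Rel (R : Set G) (x y : G) (c : ℝ) : Prop := Ar R (x * y⁻¹) c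

theorem Rel.mono {x y : G} {c d : ℝ} (h : Rel R x y c) (hcd : c ≤ d) : Rel R x y d :=
  Ar.mono h hcd

theorem Rel.refl (x : G) {c : ℝ} (hc : 0 ≤ c) : Rel R x x c := by
  unfold Rel; simpa using Ar.one hc

theorem Rel.symm {x y : G} {c : ℝ} (h : Rel R x y c) : Rel R y x c := by
  unfold Rel at *; simpa using h.inv

theorem Rel.trans {x y z : G} {c d : ℝ} (h : Rel R x y c) (h' : Rel R y z d) :
    Rel R x z (c + d) := by
  unfold Rel at *; simpa [mul_assoc] using h.mul h'

theorem Rel.mul {x y x' y' : G} {c d : ℝ} (h : Rel R x y c) (h' : Rel R x' y' d) :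
    Rel R (x * x') (y * y') (c + d) := by
  unfold Rel at *
  have h2 := h'.conj x⁻¹
  have := h2.mul h
  rw [add_comm]
  convert this using 1
  group

theorem Rel.mul_left {x y : G} {c : ℝ} (g : G) (h : Rel R x y c) : Rel R (g * x) (g * y) c := by
  simpa using (Rel.refl g le_rfl).mul h

theorem Rel.mul_right {x y : G} {c : ℝ} (g : G) (h : Rel R x y c) : Rel R (x * g) (y * g) c := by
  simpa using h.mul (Rel.refl g le_rfl)

theorem Rel.inv {x y : G} {c : ℝ} (h : Rel R x y c) : Rel R x⁻¹ y⁻¹ c := by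
  have := (h.symm.mul_left x⁻¹).mul_right y⁻¹
  simpa [mul_assoc] using this

def cj (b Y : G) : G := Y⁻¹ * b * Y

theorem cj_mul (b Y Z : G) : cj b (Y * Z) = cj (cj b Y) Z := by simp [cj, mul_assoc]

theorem Rel.cj {x y : G} {c : ℝ} (h : Rel R x y c) (g : G) : Rel R (cj x g) (cj y g) c :=
  (h.mul_left g⁻¹).mul_right g

theorem Rel.cj' (b : G) {x y : G} {c : ℝ} (h : Rel R x y c) :
    Rel R (CAB.cj b x) (CAB.cj b y) (c + c) := by
  unfold CAB.cj
  exact (h.inv.mul_right b).mul h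

theorem pcomm_iff {x h : G} {c : ℝ} : Ar R (pcomm x h) c ↔ Rel R (cj x h) x c := by
  unfold Rel pcomm cj
  constructor
  · intro H
    have := H.conj x⁻¹
    convert this using 1; group
  · intro H
    have := H.conj x
    convert this using 1; group

theorem pcomm_symm {x h : G} {c : ℝ} (H : Ar R (pcomm x h) c) : Ar R (pcomm h x) c := by
  have := H.inv
  convert this using 1; simp [pcomm, mul_assoc]

theorem pcomm_inv_left {x h : G} {c : ℝ} (H : Ar R (pcomm x h) c) : Ar R (pcomm x⁻¹ h) c := by
  rw [pcomm_iff] at *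
  have := H.inv
  convert this using 1; simp [cj, mul_assoc]

theorem pcomm_mul_left {x y h : G} {c d : ℝ} (H : Ar R (pcomm x h) c) (H' : Ar R (pcomm y h) d) :
    Ar R (pcomm (x * y) h) (c + d) := by
  rw [pcomm_iff] at *
  have := H.mul H'
  convert this using 1; simp [cj, mul_assoc]

theorem pcomm_zpow_left {x h : G} {c : ℝ} (H : Ar R (pcomm x h) c) (n : ℤ) :
    Ar R (pcomm (x ^ n) h) (|(n : ℝ)| * c) := by
  have key : ∀ n : ℕ, Ar R (pcomm (x ^ n) h) (n * c) := by
    intro n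
    induction n with
    | zero => simpa [pcomm] using Ar.one (R := R) (G := G) le_rfl
    | succ n ih =>
      rw [pow_succ]
      refine (pcomm_mul_left ih H).mono (by push_cast; linarith)
  obtain ⟨m, rfl | rfl⟩ := n.eq_nat_or_neg
  · simpa using key m
  · simpa using pcomm_inv_left (key m)

theorem pcomm_congr_left {x y h : G} {c d : ℝ} (H : Rel R x y c) (H' : Ar R (pcomm y h) d) :
    Ar R (pcomm x h) (2 * c + d) := by
  rw [pcomm_iff] at *
  exact (((H.cj h).trans H').trans H.symm).mono (by linarith)

theorem pcomm_congr_right {x h h' : G} {c d : ℝ} (H : Rel R h h' c) (H' : Ar R (pcomm x h') d) :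
    Ar R (pcomm x h) (2 * c + d) :=
  pcomm_symm (pcomm_congr_left H (pcomm_symm H'))

theorem pcomm_conj {x h : G} {c : ℝ} (g : G) (H : Ar R (pcomm x (cj h g⁻¹)) c) :
    Ar R (pcomm (cj x g) h) c := by
  have := H.conj g
  convert this using 1
  simp [pcomm, cj, mul_assoc]

theorem pcomm_list {ι : Type*} (l : List ι) (f : ι → G) (e : ι → ℝ) (h : G)
    (H : ∀ i ∈ l, Ar R (pcomm (f i) h) (e i)) :
    Ar R (pcomm (l.map f).prod h) (l.map e).sum := by
  induction l with
  | nil => simpa [pcomm] using Ar.one (R := R) (G := G) le_rfl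
  | cons a l ih =>
    simp only [List.map_cons, List.prod_cons, List.sum_cons]
    exact pcomm_mul_left (H a (by simp)) (ih fun i hi => H i (by simp [hi]))

/-- one square -/
theorem square {P Q g b Z : G} {c : ℝ} (h : Rel R (P * Q) (Q * P * g) 1)
    (hg : Ar R (pcomm g (cj b Z)) c) :
    Rel R (cj b (Z * P⁻¹)) (cj b (Z * Q⁻¹ * P⁻¹ * Q)) (2 + c) := by
  have h1 : Rel R (Q * g⁻¹ * P⁻¹) (P⁻¹ * Q) 1 := by
    have := ((h.mul_left P⁻¹).mul_right (g⁻¹ * P⁻¹))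
    convert this using 1 <;> group
  have h2 := (h1.symm.mul_left (Z * Q⁻¹)).cj' b
  have h3 : Rel R (cj (cj b Z) g⁻¹) (cj b Z) c :=
    pcomm_iff.1 (pcomm_symm (pcomm_inv_left hg))
  have h4 := (h3.cj P⁻¹).symm
  have h5 := h4.trans (d := 1 + 1) (z := cj b (Z * Q⁻¹ * P⁻¹ * Q)) (by
    have h6 := h2.symm
    convert h6 using 1
    · simp [cj, mul_assoc]
    · simp [cj, mul_assoc])
  rw [cj_mul]
  exact h5.mono (by linarith)

/-- passing along a column -/
theorem column {P Q g b X Y : G} {c₀ : ℝ} {e : ℤ → ℝ} (n : ℤ)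
    (h : Rel R (P * Q) (Q * P * g) 1)
    (h0 : Rel R (cj b (Y * P⁻¹)) (cj b X) c₀)
    (he : ∀ l : ℤ, l.natAbs ≤ n.natAbs → Ar R (pcomm g (cj b (Y * Q ^ l))) (e l))
    (hmono : ∀ l : ℕ, e (-(l : ℤ)) ≤ e (l + 1)) (hpos : ∀ l, 0 ≤ e l) :
    Rel R (cj b (Y * Q ^ n * P⁻¹)) (cj b (X * Q ^ n))
      (c₀ + ∑ l ∈ Finset.range (n.natAbs + 1), (2 + e l)) := by
  have up : ∀ (l : ℤ) (c : ℝ), (l + 1).natAbs ≤ n.natAbs →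
      Rel R (cj b (Y * Q ^ l * P⁻¹)) (cj b (X * Q ^ l)) c →
      Rel R (cj b (Y * Q ^ (l + 1) * P⁻¹)) (cj b (X * Q ^ (l + 1))) (c + (2 + e (l + 1))) := by
    intro l c hl hc
    have h1 := square h (he (l + 1) hl)
    have h2 := hc.cj Q
    rw [← cj_mul, ← cj_mul] at h2
    have h3 := h1.trans (z := cj b (X * Q ^ (l + 1))) (d := c) (by
      convert h2 using 2
      · rw [zpow_add_one]; group
      · rw [zpow_add_one]; group)
    exact h3.mono (by linarith)
  have dn : ∀ (l : ℤ) (c : ℝ), (l + 1).natAbs ≤ n.natAbs →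
      Rel R (cj b (Y * Q ^ (l + 1) * P⁻¹)) (cj b (X * Q ^ (l + 1))) c →
      Rel R (cj b (Y * Q ^ l * P⁻¹)) (cj b (X * Q ^ l)) (c + (2 + e (l + 1))) := by
    intro l c hl hc
    have h1 := square h (he (l + 1) hl)
    have h3 := (h1.symm.trans hc).cj Q⁻¹
    rw [← cj_mul, ← cj_mul] at h3
    have h4 : Rel R (cj b (Y * Q ^ l * P⁻¹)) (cj b (X * Q ^ l)) (2 + e (l + 1) + c) := by
      convert h3 using 2
      · rw [zpow_add_one]; group
      · rw [zpow_add_one]; group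
    exact h4.mono (by linarith)
  have pos : ∀ m : ℕ, m ≤ n.natAbs → Rel R (cj b (Y * Q ^ (m : ℤ) * P⁻¹)) (cj b (X * Q ^ (m : ℤ)))
      (c₀ + ∑ l ∈ Finset.range (m + 1), (2 + e l)) := by
    intro m
    induction m with
    | zero =>
      intro _
      have := h0.mono (d := c₀ + ∑ l ∈ Finset.range (0 + 1), (2 + e l))
        (by have := hpos 0; simp; linarith)
      simpa using this
    | succ m ih =>
      intro hm
      have := up m _ (by omega) (ih (by omega))
      rw [Finset.sum_range_succ]
      push_cast
      exact this.mono (by push_cast; linarith)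
  have neg : ∀ m : ℕ, m ≤ n.natAbs →
      Rel R (cj b (Y * Q ^ (-(m : ℤ)) * P⁻¹)) (cj b (X * Q ^ (-(m : ℤ))))
      (c₀ + ∑ l ∈ Finset.range (m + 1), (2 + e l)) := by
    intro m
    induction m with
    | zero =>
      intro _
      have := h0.mono (d := c₀ + ∑ l ∈ Finset.range (0 + 1), (2 + e l))
        (by have := hpos 0; simp; linarith)
      simpa using this
    | succ m ih =>
      intro hm
      have e1 : (-((m + 1 : ℕ) : ℤ)) + 1 = -(m : ℤ) := by push_cast; ring
      have := dn (-((m + 1 : ℕ) : ℤ)) (c₀ + ∑ l ∈ Finset.range (m + 1), (2 + e l)) (by omega)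
        (by rw [e1]; exact ih (by omega))
      rw [Finset.sum_range_succ]
      refine this.mono ?_
      have := hmono m
      rw [e1]
      push_cast
      linarith
  rcases Int.natAbs_eq n with hn | hn
  · have := pos n.natAbs le_rfl
    rwa [← hn] at this
  · have := neg n.natAbs le_rfl
    rwa [← hn] at this

end area
end CAB
namespace CAB

noncomputable def ph (M : ℕ) (n : ℤ) : ℝ := Real.sqrt ((M : ℝ) ^ 2 + (n : ℝ) ^ 2)

theorem ph_nonneg (M : ℕ) (n : ℤ) : 0 ≤ ph M n := Real.sqrt_nonneg _

theorem ph_sq (M : ℕ) (n : ℤ) : ph M n ^ 2 = (M : ℝ) ^ 2 + (n : ℝ) ^ 2 :=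
  Real.sq_sqrt (by positivity)

theorem ph_mono (M : ℕ) {a b : ℤ} (h : a.natAbs ≤ b.natAbs) : ph M a ≤ ph M b := by
  apply Real.sqrt_le_sqrt
  have : a ^ 2 ≤ b ^ 2 := Int.natAbs_le_iff_sq_le.1 h
  have : (a : ℝ) ^ 2 ≤ (b : ℝ) ^ 2 := by exact_mod_cast this
  linarith

theorem ph_le (M : ℕ) (n : ℤ) : ph M n ≤ M + |(n : ℝ)| := by
  apply Real.sqrt_le_iff.2
  refine ⟨by positivity, ?_⟩
  have := sq_abs (n : ℝ)
  have h1 : 0 ≤ (M : ℝ) * |(n : ℝ)| := by positivity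
  nlinarith

theorem abs_le_ph (M : ℕ) (n : ℤ) : |(n : ℝ)| ≤ ph M n := by
  apply Real.abs_le_sqrt
  nlinarith [sq_nonneg (M : ℝ)]

theorem le_ph (M : ℕ) (n : ℤ) : (M : ℝ) ≤ ph M n := by
  apply Real.le_sqrt_of_sq_le
  nlinarith [sq_nonneg (n : ℝ)]

theorem ph_sub (M : ℕ) (hM : 1 ≤ M) (n v : ℤ) :
    ph M (n - v) ≤ ph M n - (n : ℝ) / ph M n * v + (v : ℝ) ^ 2 / (2 * M) := by
  have hM' : (1 : ℝ) ≤ M := by exact_mod_cast hM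
  have hs : 0 < ph M n := by linarith [le_ph M n]
  have h2 := ph_sq M n
  have h1 : ph M (n - v) ≤ ph M n - (n : ℝ) / ph M n * v + (v : ℝ) ^ 2 / (2 * ph M n) := by
    have e : ph M n - (n : ℝ) / ph M n * v + (v : ℝ) ^ 2 / (2 * ph M n)
        = (ph M n ^ 2 + ph M (n - v) ^ 2) / (2 * ph M n) := by
      rw [ph_sq M (n - v)]
      field_simp
      push_cast
      rw [h2]; ring
    rw [e, le_div_iff₀ (by positivity)]
    nlinarith [sq_nonneg (ph M n - ph M (n - v))]
  have h3 : (v : ℝ) ^ 2 / (2 * ph M n) ≤ (v : ℝ) ^ 2 / (2 * M) := by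
    have := le_ph M n
    gcongr
  linarith

theorem ph_gap (M n : ℕ) (h : M ≤ n) : ph M n + 1 / 4 ≤ ph M ((n : ℤ) + 1) := by
  apply Real.le_sqrt_of_sq_le
  have h1 := ph_sq M n
  have h2 := ph_le M n
  have h3 : (M : ℝ) ≤ n := by exact_mod_cast h
  have h4 : |((n : ℤ) : ℝ)| = n := by simp
  rw [h4] at h2
  push_cast at *
  nlinarith

theorem ph_even (M : ℕ) (n : ℤ) : ph M (-n) = ph M n := by simp [ph]

theorem ph_gap' (M : ℕ) (n : ℤ) (h : M + 1 ≤ n.natAbs) :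
    ph M (n - n.sign) ≤ ph M n - 1 / 4 := by
  obtain ⟨m, hm⟩ : ∃ m, n.natAbs = m + 1 := ⟨n.natAbs - 1, by omega⟩
  have := ph_gap M m (by omega)
  rcases Int.natAbs_eq n with hn | hn
  · rw [hm] at hn
    have : n.sign = 1 := Int.sign_eq_one_of_pos (by omega)
    rw [this, hn]
    push_cast at *
    rw [add_sub_cancel_right]
    linarith
  · rw [hm] at hn
    have : n.sign = -1 := Int.sign_eq_neg_one_of_neg (by omega)
    rw [this, hn]
    have e : (-((m + 1 : ℕ) : ℤ)) - (-1) = -(m : ℤ) := by push_cast; ring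
    rw [e, ph_even, ph_even]
    push_cast at *
    linarith

theorem geom (M : ℕ) (K : ℝ) (hK : 16 ≤ K) (n : ℕ) :
    ∑ l ∈ Finset.range (n + 1), K ^ ph M l ≤ (M + 2) * K ^ ph M n := by
  have hK0 : 0 < K := by linarith
  rcases le_or_gt n M with h | h
  · calc ∑ l ∈ Finset.range (n + 1), K ^ ph M l ≤ ∑ l ∈ Finset.range (n + 1), K ^ ph M n := by
          apply Finset.sum_le_sum
          intro l hl
          apply Real.rpow_le_rpow_of_exponent_le (by linarith)
          apply ph_mono
          simp at hl ⊢; omega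
      _ = (n + 1) * K ^ ph M n := by simp
      _ ≤ _ := by
        have : (n : ℝ) ≤ M := by exact_mod_cast h
        have : 0 < K ^ ph M n := Real.rpow_pos_of_pos hK0 _
        nlinarith
  · induction n, h.le using Nat.le_induction with
    | base => omega
    | succ n hn ih =>
      have ih' : ∑ l ∈ Finset.range (n + 1), K ^ ph M l ≤ (M + 2) * K ^ ph M n := by
        rcases Nat.lt_or_ge M n with h' | h'
        · exact ih h'
        · have hnM : n = M := by omega
          subst hnM
          calc ∑ l ∈ Finset.range (n + 1), K ^ ph n l
                ≤ ∑ l ∈ Finset.range (n + 1), K ^ ph n n := by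
                apply Finset.sum_le_sum
                intro l hl
                apply Real.rpow_le_rpow_of_exponent_le (by linarith)
                apply ph_mono
                simp at hl ⊢; omega
            _ = (n + 1) * K ^ ph n n := by simp
            _ ≤ _ := by
              have : 0 < K ^ ph n n := Real.rpow_pos_of_pos hK0 _
              nlinarith
      rw [Finset.sum_range_succ]
      have h1 : K ^ ph M n * 2 ≤ K ^ ph M ((n : ℤ) + 1) := by
        have h2 : (2 : ℝ) ≤ K ^ (1 / 4 : ℝ) := by
          have : (2 : ℝ) = 16 ^ (1 / 4 : ℝ) := by
            rw [show (16 : ℝ) = 2 ^ (4 : ℝ) by norm_num, ← Real.rpow_mul (by norm_num)]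
            norm_num
          rw [this]
          exact Real.rpow_le_rpow (by norm_num) hK (by norm_num)
        calc K ^ ph M n * 2 ≤ K ^ ph M n * K ^ (1 / 4 : ℝ) := by
              have : 0 < K ^ ph M n := Real.rpow_pos_of_pos hK0 _
              nlinarith
          _ = K ^ (ph M n + 1 / 4) := by rw [Real.rpow_add hK0]
          _ ≤ _ := Real.rpow_le_rpow_of_exponent_le (by linarith) (ph_gap M n hn)
      push_cast
      have hM0 : (0 : ℝ) ≤ M := by positivity
      have : 0 < K ^ ph M n := Real.rpow_pos_of_pos hK0 _
      nlinarith

noncomputable def NN (M k : ℕ) (y : ℕ → ℤ) : ℝ := ∑ i ∈ Finset.range k, ph M (y i)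

theorem NN_nonneg (M k : ℕ) (y : ℕ → ℤ) : 0 ≤ NN M k y :=
  Finset.sum_nonneg fun _ _ => ph_nonneg _ _

theorem NN_mono (M k : ℕ) {y x : ℕ → ℤ} (h : ∀ i < k, (y i).natAbs ≤ (x i).natAbs) :
    NN M k y ≤ NN M k x :=
  Finset.sum_le_sum fun i hi => ph_mono M (h i (Finset.mem_range.1 hi))

theorem NN_le (M k L : ℕ) {y : ℕ → ℤ} (h : ∀ i < k, (y i).natAbs ≤ L) :
    NN M k y ≤ k * (M + L) := by
  calc NN M k y ≤ ∑ i ∈ Finset.range k, ((M : ℝ) + L) := by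
        apply Finset.sum_le_sum
        intro i hi
        refine (ph_le M _).trans ?_
        have := h i (Finset.mem_range.1 hi)
        have h1 : |y i| ≤ (L : ℤ) := abs_le.2 ⟨by omega, by omega⟩
        have h2 : |(y i : ℝ)| ≤ L := by exact_mod_cast h1
        linarith
    _ = _ := by simp; ring

def trv (y : ℕ → ℤ) (j : ℕ) (l : ℤ) : ℕ → ℤ :=
  fun i => if i < j then y i else if i = j then l else 0

theorem NN_trv (M k : ℕ) (y : ℕ → ℤ) (j : ℕ) (hj : j < k) (l : ℤ) :
    NN M k (trv y j l) ≤ NN M k y - ph M (y j) + ph M l := by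
  have h1 : NN M k (trv y j l) ≤ NN M k (Function.update y j l) := by
    apply NN_mono
    intro i _
    unfold trv
    rcases lt_trichotomy i j with h | h | h
    · simp [h, h.ne]
    · subst h; simp
    · simp [h.not_gt, h.ne']
  have h2 : NN M k (Function.update y j l) = NN M k y - ph M (y j) + ph M l := by
    unfold NN
    rw [← Finset.add_sum_erase _ _ (Finset.mem_range.2 hj),
      ← Finset.add_sum_erase (Finset.range k) (fun i => ph M (y i)) (Finset.mem_range.2 hj)]
    have : ∑ x ∈ (Finset.range k).erase j, ph M (Function.update y j l x)
        = ∑ x ∈ (Finset.range k).erase j, ph M (y x) := by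
      apply Finset.sum_congr rfl
      intro x hx
      rw [Function.update_of_ne (Finset.ne_of_mem_erase hx)]
    rw [this]
    simp
    ring
  linarith

section words
variable {G : Type*} [Group G] {R : Set G}

def W (T : ℕ → G) (y : ℕ → ℤ) (n : ℕ) : G := ((List.range n).map fun i => T i ^ y i).prod

@[simp] theorem W_zero (T : ℕ → G) (y : ℕ → ℤ) : W T y 0 = 1 := by simp [W]

theorem W_succ (T : ℕ → G) (y : ℕ → ℤ) (n : ℕ) : W T y (n + 1) = W T y n * T n ^ y n := by
  simp [W, List.range_succ]

theorem W_congr (T : ℕ → G) {y x : ℕ → ℤ} (n : ℕ) (h : ∀ i < n, y i = x i) :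
    W T y n = W T x n := by
  induction n with
  | zero => simp
  | succ n ih => rw [W_succ, W_succ, ih (fun i hi => h i (by omega)), h n (by omega)]

theorem W_split (T : ℕ → G) {z d : ℕ → ℤ} (i : ℕ) (hd : ∀ j < i, d j = 0)
    (hz : ∀ j, i < j → z j = 0) (n : ℕ) :
    W T (fun j => z j + d j) n = W T z n * W T d n := by
  have h1 : ∀ n ≤ i, W T d n = 1 := by
    intro n
    induction n with
    | zero => simp
    | succ n ih => intro h; rw [W_succ, ih (by omega), hd n (by omega)]; simp
  induction n with
  | zero => simp
  | succ n ih =>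
    rw [W_succ, W_succ, W_succ, ih]
    rcases le_or_gt n i with h | h
    · rw [h1 n h, zpow_add]; group
    · rw [hz n h]; simp [mul_assoc]

theorem W_trv (T : ℕ → G) (y : ℕ → ℤ) (j : ℕ) (l : ℤ) (k : ℕ) (hj : j < k) :
    W T (trv y j l) k = W T y j * T j ^ l := by
  induction k, (show j + 1 ≤ k from hj) using Nat.le_induction with
  | base =>
    rw [W_succ]
    rw [W_congr T (x := y) j (by intro i hi; simp [trv, hi])]
    simp [trv]
  | succ k hk ih =>
    rw [W_succ, ih hk]
    have : trv y j l k = 0 := by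
      unfold trv
      rw [if_neg (by omega), if_neg (by omega)]
    rw [this]; simp

theorem W_front (T : ℕ → G) (y : ℕ → ℤ) (n : ℕ) :
    W T y (n + 1) = T 0 ^ y 0 * W (fun i => T (i + 1)) (fun i => y (i + 1)) n := by
  induction n with
  | zero => simp [W_succ]
  | succ n ih => rw [W_succ, ih, W_succ]; simp [mul_assoc]

theorem W_inv (T : ℕ → G) (y : ℕ → ℤ) (n : ℕ) :
    (W T y n)⁻¹ = W (fun i => T (n - 1 - i)) (fun i => - y (n - 1 - i)) n := by
  induction n with
  | zero => simp
  | succ n ih =>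
    rw [W_succ, mul_inv_rev, ih, W_front]
    simp only [zpow_neg]
    congr 1
    congr 1
    · funext i; congr 1; omega
    · funext i; congr 2; omega

theorem NN_rev (M k : ℕ) (y : ℕ → ℤ) : NN M k (fun i => - y (k - 1 - i)) = NN M k y := by
  unfold NN
  simp only [ph_even]
  exact Finset.sum_range_reflect (fun i => ph M (y i)) k

end words
end CAB
namespace CAB
section steps
variable {G : Type*} [Group G] {R : Set G} {ι : Type*}

def Hyp (R : Set G) (A : ι → G) (T : ℕ → G) (M k : ℕ) (K r : ℝ) : Prop :=
  ∀ a b x, NN M k x ≤ r → Ar R (pcomm (A a) (cj (A b) (W T x k))) (K ^ NN M k x)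

def HT (R : Set G) (A : ι → G) (T : ℕ → G) (k : ℕ) : Prop :=
  ∀ i j, i < k → j < k → i ≠ j → ∃ g, (∃ a, g = A a ∨ g = (A a)⁻¹) ∧
    Rel R (T i * T j) (T j * T i * g) 1

variable {A : ι → G} {T : ℕ → G} {M k : ℕ} {K r : ℝ}

theorem edge (hK : 16 ≤ K) (hT : HT R A T k) (hyp : Hyp R A T M k K r) (b : ι) (y : ℕ → ℤ)
    (i : ℕ) (hi : i < k) (hy : NN M k y ≤ r) :
    Rel R (cj (A b) (W T y k * (T i)⁻¹)) (cj (A b) (W T (Function.update y i (y i - 1)) k))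
      (k * (3 * (M + 2) * K ^ r)) := by
  have hK0 : 0 < K := by linarith
  have hK1 : 1 ≤ K := by linarith
  have hr0 : 0 < K ^ r := Real.rpow_pos_of_pos hK0 _
  set y' := Function.update y i (y i - 1) with hy'
  have key : ∀ j, i + 1 ≤ j → j ≤ k → Rel R (cj (A b) (W T y j * (T i)⁻¹)) (cj (A b) (W T y' j))
      (j * (3 * (M + 2) * K ^ r)) := by
    intro j hj
    induction j, hj using Nat.le_induction with
    | base =>
      intro _
      have : W T y (i + 1) * (T i)⁻¹ = W T y' (i + 1) := by
        rw [W_succ, W_succ, W_congr T (y := y') (x := y) i]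
        · simp [hy', zpow_sub_one, mul_assoc]
        · intro l hl; simp [hy', hl.ne]
      rw [this]
      exact Rel.refl _ (by positivity)
    | succ j hij ih =>
      intro hjk
      have ih := ih (by omega)
      obtain ⟨g, hg, hrel⟩ := hT i j hi (by omega) (by omega)
      set q := K ^ (NN M k y - ph M (y j)) with hq
      have hq0 : 0 < q := Real.rpow_pos_of_pos hK0 _
      have hge : ∀ l : ℤ, q * K ^ ph M l = K ^ (NN M k y - ph M (y j) + ph M l) := by
        intro l; rw [hq, Real.rpow_add hK0]
      have hge1 : ∀ l : ℤ, 1 ≤ q * K ^ ph M l := by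
        intro l
        rw [hge]
        apply Real.one_le_rpow hK1
        have := NN_trv M k y j (by omega) l
        have := NN_nonneg M k (trv y j l)
        linarith
      have hc := column (e := fun l => q * K ^ ph M l) (y j) hrel ih ?_ ?_ ?_
      · have e1 : y' j = y j := by
          rw [hy', Function.update_of_ne (by omega)]
        rw [W_succ, W_succ, e1]
        refine hc.mono ?_
        have h1 : ∑ l ∈ Finset.range ((y j).natAbs + 1), (2 + q * K ^ ph M l)
            ≤ 3 * (M + 2) * K ^ r := by
          calc ∑ l ∈ Finset.range ((y j).natAbs + 1), (2 + q * K ^ ph M l)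
              ≤ ∑ l ∈ Finset.range ((y j).natAbs + 1), 3 * q * K ^ ph M l := by
                apply Finset.sum_le_sum
                intro l _
                have := hge1 l
                linarith
            _ = 3 * q * ∑ l ∈ Finset.range ((y j).natAbs + 1), K ^ ph M l := by
                rw [Finset.mul_sum]
            _ ≤ 3 * q * ((M + 2) * K ^ ph M (y j).natAbs) := by
                have := geom M K hK (y j).natAbs
                gcongr
            _ = 3 * (M + 2) * (q * K ^ ph M (y j).natAbs) := by ring
            _ ≤ 3 * (M + 2) * K ^ r := by
                have : q * K ^ ph M (y j).natAbs ≤ K ^ r := by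
                  rw [hge]
                  apply Real.rpow_le_rpow_of_exponent_le hK1
                  have : ph M ((y j).natAbs : ℤ) ≤ ph M (y j) :=
                    ph_mono M (by rw [Int.natAbs_natCast])
                  linarith
                gcongr
        push_cast
        linarith
      · intro l hl
        have h1 := NN_trv M k y j (by omega) l
        have h2 := ph_mono M hl
        have h3 : Ar R (pcomm g (cj (A b) (W T (trv y j l) k))) (K ^ NN M k (trv y j l)) := by
          obtain ⟨a, rfl | rfl⟩ := hg
          · exact hyp a b _ (by linarith)
          · exact pcomm_inv_left (hyp a b _ (by linarith))
        rw [W_trv T y j l k (by omega)] at h3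
        refine h3.mono ?_
        rw [hge]
        exact Real.rpow_le_rpow_of_exponent_le hK1 h1
      · intro l
        have : K ^ ph M (-(l : ℤ)) ≤ K ^ ph M ((l : ℤ) + 1) :=
          Real.rpow_le_rpow_of_exponent_le hK1 (ph_mono M (by omega))
        exact mul_le_mul_of_nonneg_left this hq0.le
      · intro l
        have := hge1 l
        linarith
  exact key k hi le_rfl

theorem lineDown (hK : 16 ≤ K) (hT : HT R A T k) (hyp : Hyp R A T M k K r) (b : ι) (y : ℕ → ℤ)
    (i : ℕ) (hi : i < k) (hy : NN M k y ≤ r) (n : ℕ)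
    (hn : NN M k (Function.update y i (y i - n)) ≤ r) :
    Rel R (cj (A b) (W T y k * T i ^ (-(n : ℤ))))
      (cj (A b) (W T (Function.update y i (y i - n)) k))
      (n * (k * (3 * (M + 2) * K ^ r))) := by
  have hK0 : 0 < K := by linarith
  have hr0 : 0 < K ^ r := Real.rpow_pos_of_pos hK0 _
  induction n with
  | zero => simpa using Rel.refl (R := R) _ le_rfl
  | succ n ih =>
    have hmid : NN M k (Function.update y i (y i - n)) ≤ r := by
      rcases le_or_gt (y i - n).natAbs (y i).natAbs with h | h
      · refine le_trans (NN_mono M k ?_) hy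
        intro l _
        rcases eq_or_ne l i with rfl | hl
        · simpa using h
        · simp [hl]
      · refine le_trans (NN_mono M k ?_) hn
        intro l _
        rcases eq_or_ne l i with rfl | hl
        · simp only [Function.update_self]; omega
        · simp [hl]
    have h1 := (ih hmid).cj (T i)⁻¹
    have h2 := edge hK hT hyp b _ i hi hmid
    simp only [Function.update_self, Function.update_idem] at h2
    rw [← cj_mul, ← cj_mul] at h1
    have h3 := h1.trans h2
    have e1 : W T y k * T i ^ (-((n + 1 : ℕ) : ℤ)) = W T y k * T i ^ (-(n : ℤ)) * (T i)⁻¹ := by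
      rw [mul_assoc, ← zpow_sub_one]; congr 2; push_cast; ring
    have e2 : y i - ((n + 1 : ℕ) : ℤ) = y i - n - 1 := by push_cast; ring
    rw [e1, e2]
    exact h3.mono (by push_cast; linarith)

theorem line (hK : 16 ≤ K) (hT : HT R A T k) (hyp : Hyp R A T M k K r) (b : ι) (y : ℕ → ℤ)
    (i : ℕ) (hi : i < k) (hy : NN M k y ≤ r) (n : ℤ)
    (hn : NN M k (Function.update y i (y i + n)) ≤ r) :
    Rel R (cj (A b) (W T y k * T i ^ n))
      (cj (A b) (W T (Function.update y i (y i + n)) k))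
      (n.natAbs * (k * (3 * (M + 2) * K ^ r))) := by
  rcases Int.natAbs_eq n with h | h
  · set y' := Function.update y i (y i + n) with hy'
    have e : Function.update y' i (y' i - n.natAbs) = y := by
      rw [← h]; simp [hy']
    have h1 := lineDown hK hT hyp b y' i hi hn n.natAbs (by rw [e]; exact hy)
    rw [e, ← h] at h1
    have h2 := (h1.cj (T i ^ n)).symm
    rw [← cj_mul, ← cj_mul] at h2
    convert h2 using 2
    group
  · have e : y i + n = y i - n.natAbs := by omega
    have h1 := lineDown hK hT hyp b y i hi hy n.natAbs (by rw [← e]; exact hn)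
    rw [← e, ← h] at h1
    exact h1

def pt (y d : ℕ → ℤ) (j : ℕ) : ℕ → ℤ := fun i => if i < j then y i + d i else y i

theorem ordPath (hK : 16 ≤ K) (hT : HT R A T k) (hyp : Hyp R A T M k K r) (b : ι)
    (y d : ℕ → ℤ) (L : ℕ) (hd : ∀ i, (d i).natAbs ≤ L)
    (hy : ∀ j, NN M k (pt y d j) ≤ r) :
    Rel R (cj (A b) (W T y k * W T d k)) (cj (A b) (W T (fun i => y i + d i) k))
      (k * (L * (k * (3 * (M + 2) * K ^ r)))) := by
  have hK0 : 0 < K := by linarith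
  have hr0 : 0 < K ^ r := Real.rpow_pos_of_pos hK0 _
  have key : ∀ j ≤ k, Rel R (cj (A b) (W T y k * W T d j)) (cj (A b) (W T (pt y d j) k))
      (j * (L * (k * (3 * (M + 2) * K ^ r)))) := by
    intro j
    induction j with
    | zero =>
      intro _
      have : pt y d 0 = y := by funext i; simp [pt]
      rw [this]
      simpa using Rel.refl (R := R) _ le_rfl
    | succ j ih =>
      intro hj
      have e : Function.update (pt y d j) j (pt y d j j + d j) = pt y d (j + 1) := by
        funext i
        rcases eq_or_ne i j with rfl | h
        · simp [pt]
        · rw [Function.update_of_ne h]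
          unfold pt
          by_cases h1 : i < j
          · rw [if_pos h1, if_pos (by omega)]
          · rw [if_neg h1, if_neg (by omega)]
      have h1 := (ih (by omega)).cj (T j ^ d j)
      rw [← cj_mul, ← cj_mul] at h1
      have h2 := line hK hT hyp b (pt y d j) j (by omega) (hy j) (d j) (by rw [e]; exact hy _)
      rw [e] at h2
      have h3 := h1.trans h2
      rw [W_succ, ← mul_assoc]
      refine h3.mono ?_
      have h4 : ((d j).natAbs : ℝ) ≤ L := by exact_mod_cast hd j
      have h5 : ((d j).natAbs : ℝ) * (k * (3 * (M + 2) * K ^ r))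
          ≤ L * (k * (3 * (M + 2) * K ^ r)) := by gcongr
      push_cast
      linarith
  have h := key k le_rfl
  rw [W_congr T (y := pt y d k) (x := fun i => y i + d i) k (by intro i hi; simp [pt, hi])] at h
  exact h

def meet (α β : ℤ) : ℤ := if 0 ≤ α then (if 0 ≤ β then min α β else 0)
  else (if 0 ≤ β then 0 else max α β)

theorem step (hK : 16 ≤ K) (hT : HT R A T k) (B D : ℕ) (hB : B = M + 1) (S : ℝ)
    (z : ℕ → ℤ) (δ : ℝ) (hδ : δ ≤ 1 / 4) (hyp : Hyp R A T M k K (NN M k z - δ))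
    (hz : (k : ℝ) * (M + (3 * (B + D) : ℕ)) + 1 ≤ NN M k z) (a b : ι)
    (l : List ((ℕ → ℤ) × ℤ))
    (hl : Rel R (A a) ((l.map fun p => cj (A a ^ p.2) (W T p.1 k)).prod) 1)
    (hS : (l.map fun p => |(p.2 : ℝ)|).sum ≤ S)
    (hv : ∀ p ∈ l, (∀ j, (p.1 j).natAbs ≤ D) ∧ NN M k (fun i => z i - p.1 i) ≤ NN M k z - δ) :
    Ar R (pcomm (A a) (cj (A b) (W T z k)))
      ((2 + S * (10 * (k * ((B + D : ℕ) * (k * (3 * (M + 2))))) + 1)) * K ^ (NN M k z - δ)) := by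
  have hK0 : 0 < K := by linarith
  have hK1 : 1 ≤ K := by linarith
  set r := NN M k z - δ with hr
  set L := B + D with hL
  have hr0 : 0 < K ^ r := Real.rpow_pos_of_pos hK0 _
  have hkr : (k : ℝ) * (M + (3 * L : ℕ)) ≤ r := by linarith
  have hr1 : 1 ≤ K ^ r := Real.one_le_rpow hK1 (le_trans (by positivity) hkr)
  have hsmall : ∀ x : ℕ → ℤ, (∀ i, (x i).natAbs ≤ 3 * L) → NN M k x ≤ r :=
    fun x hx => (NN_le M k (3 * L) fun i _ => hx i).trans hkr
  -- the last big coordinate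
  obtain ⟨i, hik, hiB, hmax⟩ : ∃ i < k, B ≤ (z i).natAbs ∧ ∀ j < k, i < j → (z j).natAbs ≤ B := by
    have hex : ∃ i < k, B ≤ (z i).natAbs := by
      by_contra hcon
      push Not at hcon
      have h1 := NN_le M k (3 * L) (y := z) (fun i hi => by have := hcon i hi; omega)
      linarith
    classical
    let s := (Finset.range k).filter fun i => B ≤ (z i).natAbs
    have hs : s.Nonempty := by
      obtain ⟨i, hi, h⟩ := hex
      exact ⟨i, by simp [s, hi, h]⟩
    refine ⟨s.max' hs, ?_, ?_, ?_⟩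
    · have := s.max'_mem hs
      simp only [s, Finset.mem_filter, Finset.mem_range] at this
      exact this.1
    · have := s.max'_mem hs
      simp only [s, Finset.mem_filter, Finset.mem_range] at this
      exact this.2
    · intro j hj hlt
      by_contra hcon
      have := s.le_max' j (by simp [s, hj]; omega)
      omega
  -- restrict z to the first k coordinates
  set z' := trv z i (z i - (z i).sign) with hz'
  set d3 : ℕ → ℤ := fun j => if j < k then z j - z' j else 0 with hd3
  have hz'r : NN M k z' ≤ r := by
    have h1 := NN_trv M k z i hik (z i - (z i).sign)
    have h2 := ph_gap' M (z i) (by omega)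
    linarith
  have hd3B : ∀ j, (d3 j).natAbs ≤ B := by
    intro j
    simp only [hd3, hz', trv]
    split_ifs with h1 h2 h3
    · simp
    · subst h3
      rcases Int.sign_trichotomy (z j) with h | h | h <;> rw [h] <;> omega
    · have := hmax j h1 (by omega)
      simpa using this
    · simp
  have hsplit : W T z k = W T z' k * W T d3 k := by
    rw [← W_split T i]
    · apply W_congr
      intro j hj
      simp [hd3, hj]
    · intro j hj
      simp [hd3, hz', trv, hj]
    · intro j hj
      simp only [hz', trv]
      rw [if_neg (by omega), if_neg (by omega)]
  set c := (k : ℝ) * (L * (k * (3 * (M + 2) * K ^ r))) with hc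
  have hc0 : 0 ≤ c := by positivity
  -- main estimate for each term
  have hterm : ∀ p ∈ l, Ar R (pcomm (cj (A a) (W T p.1 k)) (cj (A b) (W T z k)))
      (10 * c + K ^ r) := by
    intro p hp
    obtain ⟨hpD, hpN⟩ := hv p hp
    set v := p.1 with hvdef
    set α : ℕ → ℤ := fun j => if j < k then z j - v j else 0 with hα
    set β : ℕ → ℤ := fun j => if j < k then z' j else 0 with hβ
    have hαβ : ∀ j, (α j - β j).natAbs ≤ L := by
      intro j
      have h1 := hd3B j
      have h2 := hpD j
      simp only [hα, hβ]
      simp only [hd3] at h1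
      split_ifs at h1 ⊢ <;> omega
    set d1 : ℕ → ℤ := fun j => meet (α j) (β j) - α j with hd1
    set d2 : ℕ → ℤ := fun j => β j - meet (α j) (β j) with hd2
    have hm1 : ∀ j, (meet (α j) (β j)).natAbs ≤ (α j).natAbs := by
      intro j; unfold meet; split_ifs <;> omega
    have hm2 : ∀ j, (meet (α j) (β j)).natAbs ≤ (β j).natAbs := by
      intro j; unfold meet; split_ifs <;> omega
    have hd1L : ∀ j, (d1 j).natAbs ≤ L := by
      intro j
      have := hαβ j
      simp only [hd1]; unfold meet; split_ifs <;> omega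
    have hd2L : ∀ j, (d2 j).natAbs ≤ L := by
      intro j
      have := hαβ j
      simp only [hd2]; unfold meet; split_ifs <;> omega
    have hd3L : ∀ j, (d3 j).natAbs ≤ L := fun j => (hd3B j).trans (by omega)
    -- small paths
    have s1 := ordPath hK hT hyp a (fun _ => 0) d1 L hd1L (by
      intro j; apply hsmall; intro i'; have := hd1L i'; simp only [pt]; split_ifs <;> omega)
    have s2 := ordPath hK hT hyp a d1 d2 L hd2L (by
      intro j; apply hsmall; intro i'; have := hd1L i'; have := hd2L i'
      simp only [pt]; split_ifs <;> omega)
    have s3 := ordPath hK hT hyp a (fun j => d1 j + d2 j) d3 L hd3L (by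
      intro j; apply hsmall; intro i'; have := hd1L i'; have := hd2L i'; have := hd3L i'
      simp only [pt]; split_ifs <;> omega)
    have hW0 : W T (fun _ => 0) k = 1 := by simp [W]
    have ev : W T (fun j => d1 j + d2 j + d3 j) k = W T v k := by
      apply W_congr
      intro j hj
      simp only [hd1, hd2, hd3, hα, hβ, if_pos hj]; ring
    have e0 : W T (fun i => 0 + d1 i) k = W T d1 k := by simp
    rw [hW0, one_mul] at s1
    rw [ev] at s3
    have t2 := s2.cj (W T d3 k)
    rw [← cj_mul, ← cj_mul] at t2
    have hsm : Rel R (cj (A a) (W T v k)) (cj (A a) (W T d1 k * W T d2 k * W T d3 k)) (2 * c) :=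
      (t2.trans s3).symm.mono (by linarith)
    -- big paths
    have b1 := ordPath hK hT hyp b α d1 L hd1L (by
      intro j
      refine le_trans (NN_mono M k (x := fun i => z i - v i) ?_) hpN
      intro i' hi'
      have h1 := hm1 i'
      have h2 : α i' = z i' - v i' := by simp [hα, hi']
      rw [← h2]
      simp only [pt, hd1]
      split_ifs
      · rw [add_sub_cancel]; exact h1
      · exact le_rfl)
    have b2 := ordPath hK hT hyp b (fun j => α j + d1 j) d2 L hd2L (by
      intro j
      refine le_trans (NN_mono M k (x := z') ?_) hz'r
      intro i' hi'
      have h1 := hm2 i'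
      have h2 : β i' = z' i' := by simp [hβ, hi']
      rw [← h2]
      simp only [pt, hd1, hd2]
      split_ifs
      · rw [add_sub_cancel, add_sub_cancel]
      · rw [add_sub_cancel]; exact h1)
    have c1 := b1.cj (W T d2 k)
    rw [← cj_mul, ← cj_mul] at c1
    have eβ : W T (fun j => α j + d1 j + d2 j) k = W T z' k := by
      apply W_congr
      intro j hj
      simp only [hd1, hd2, hβ, if_pos hj]; ring
    have eα : W T α k = W T (fun i => z i - v i) k := by
      apply W_congr
      intro j hj
      simp only [hα, if_pos hj]
    rw [eβ] at b2
    have c2 := (c1.trans b2).symm.cj (W T d1 k * W T d2 k)⁻¹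
    rw [← cj_mul, ← cj_mul] at c2
    have hbig : Rel R (cj (A b) (W T z' k * (W T d1 k * W T d2 k)⁻¹))
        (cj (A b) (W T (fun i => z i - v i) k)) (2 * c) := by
      have : W T α k * W T d1 k * W T d2 k * (W T d1 k * W T d2 k)⁻¹ = W T α k := by group
      rw [this, eα] at c2
      exact c2.mono (by linarith)
    have hfin := pcomm_congr_right hbig (hyp a b _ hpN)
    have hconj : Ar R (pcomm (cj (A a) (W T d1 k * W T d2 k * W T d3 k)) (cj (A b) (W T z k)))
        (2 * (2 * c) + K ^ r) := by
      apply pcomm_conj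
      rw [← cj_mul]
      have : W T z k * (W T d1 k * W T d2 k * W T d3 k)⁻¹
          = W T z' k * (W T d1 k * W T d2 k)⁻¹ := by rw [hsplit]; group
      rw [this]
      refine hfin.mono ?_
      have : K ^ NN M k (fun i => z i - v i) ≤ K ^ r :=
        Real.rpow_le_rpow_of_exponent_le hK1 hpN
      linarith
    exact (pcomm_congr_left hsm hconj).mono (by linarith)
  have hprod := pcomm_list l (fun p => cj (A a ^ p.2) (W T p.1 k))
    (fun p => |(p.2 : ℝ)| * (10 * c + K ^ r)) (cj (A b) (W T z k)) (by
      intro p hp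
      have := pcomm_zpow_left (hterm p hp) p.2
      convert this using 2
      simp only [cj]
      have := conj_zpow (i := p.2) (a := (W T p.1 k)⁻¹) (b := A a)
      simpa using this.symm)
  have hres := pcomm_congr_left hl hprod
  refine hres.mono ?_
  have e1 : (l.map fun p => |(p.2 : ℝ)| * (10 * c + K ^ r)).sum
      = (l.map fun p => |(p.2 : ℝ)|).sum * (10 * c + K ^ r) := by
    rw [List.sum_map_mul_right]
  rw [e1]
  have h2 : (l.map fun p => |(p.2 : ℝ)|).sum * (10 * c + K ^ r) ≤ S * (10 * c + K ^ r) := by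
    gcongr
  have h3 : S * (10 * c + K ^ r)
      = S * (10 * (k * (L * (k * (3 * (M + 2))))) + 1) * K ^ r := by
    rw [hc]; ring
  rw [h3] at h2
  linarith

end steps
end CAB
namespace CAB

theorem tameEps {k : ℕ} (Lp Lm : Finset ((Fin k → ℤ) →₀ ℤ)) (htame : TameCond Lp Lm) :
    ∃ ε : ℝ, 0 < ε ∧ ∀ x : Fin k → ℝ, ‖x‖ ≤ 1 → 1 / 2 ≤ ‖x‖ →
      ∃ lam ∈ Lp ∪ Lm, ∀ v ∈ lam.support, ε ≤ ∑ i, x i * (v i : ℝ) := by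
  let U : ℕ → Set (Fin k → ℝ) := fun n =>
    {x | ∃ lam ∈ Lp ∪ Lm, ∀ v ∈ lam.support, 1 / ((n : ℝ) + 1) < ∑ i, x i * (v i : ℝ)}
  have hU : ∀ n, IsOpen (U n) := by
    intro n
    have : U n = ⋃ lam ∈ Lp ∪ Lm, ⋂ v ∈ lam.support,
        {x : Fin k → ℝ | 1 / ((n : ℝ) + 1) < ∑ i, x i * (v i : ℝ)} := by
      ext x; simp [U]
    rw [this]
    refine isOpen_biUnion fun lam _ => ?_
    refine isOpen_biInter_finset fun v _ => ?_
    exact isOpen_lt continuous_const (by fun_prop)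
  have hcomp : IsCompact (Metric.closedBall (0 : Fin k → ℝ) 1 ∩ {x | 1 / 2 ≤ ‖x‖}) :=
    (isCompact_closedBall _ _).inter_right (isClosed_le continuous_const continuous_norm)
  have hcov : (Metric.closedBall (0 : Fin k → ℝ) 1 ∩ {x | 1 / 2 ≤ ‖x‖}) ⊆ ⋃ n, U n := by
    rintro x ⟨_, hx⟩
    have hx0 : x ≠ 0 := by
      rintro rfl
      simp only [Set.mem_setOf_eq, norm_zero] at hx
      linarith
    obtain ⟨lam, hlam, h⟩ := htame x hx0
    have hev : ∀ᶠ n : ℕ in Filter.atTop, ∀ v ∈ lam.support,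
        1 / ((n : ℝ) + 1) < ∑ i, x i * (v i : ℝ) := by
      rw [Filter.eventually_all_finset]
      intro v hv
      exact tendsto_one_div_add_atTop_nhds_zero_nat.eventually (gt_mem_nhds (h v hv))
    obtain ⟨n, hn⟩ := hev.exists
    exact Set.mem_iUnion.2 ⟨n, lam, hlam, hn⟩
  have hmonoU : Monotone U := by
    rintro n m hnm x ⟨lam, hlam, h⟩
    refine ⟨lam, hlam, fun v hv => lt_of_le_of_lt ?_ (h v hv)⟩
    have : (n : ℝ) ≤ m := by exact_mod_cast hnm
    gcongr
  obtain ⟨n, hn⟩ := hcomp.elim_directed_cover U hU hcov hmonoU.directed_le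
  refine ⟨1 / ((n : ℝ) + 1), by positivity, ?_⟩
  intro x h1 h2
  obtain ⟨lam, hlam, h⟩ := hn (show x ∈ _ from ⟨by simpa using h1, h2⟩)
  exact ⟨lam, hlam, fun v hv => (h v hv).le⟩

def ext {k : ℕ} (v : Fin k → ℤ) : ℕ → ℤ := fun i => if h : i < k then v ⟨i, h⟩ else 0

theorem ext_fin {k : ℕ} (v : Fin k → ℤ) (i : Fin k) : ext v i = v i := by simp [ext]

theorem decrease {k : ℕ} (Λ : Finset ((Fin k → ℤ) →₀ ℤ)) (ε : ℝ) (D M : ℕ) (hM : 1 ≤ M)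
    (hε : ∀ x : Fin k → ℝ, ‖x‖ ≤ 1 → 1 / 2 ≤ ‖x‖ →
      ∃ lam ∈ Λ, ∀ v ∈ lam.support, ε ≤ ∑ i, x i * (v i : ℝ))
    (hD : ∀ lam ∈ Λ, ∀ v ∈ lam.support, ∀ i, (v i).natAbs ≤ D)
    (hMD : (k : ℝ) * D ^ 2 ≤ M * ε)
    (z : ℕ → ℤ) (hz : (k : ℝ) * (M + M) < NN M k z) :
    ∃ lam ∈ Λ, ∀ v ∈ lam.support, NN M k (fun i => z i - ext v i) ≤ NN M k z - ε / 2 := by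
  have hM0 : (1 : ℝ) ≤ M := by exact_mod_cast hM
  have hp : ∀ n, 0 < ph M n := fun n => by linarith [le_ph M n]
  obtain ⟨i, hik, hi⟩ : ∃ i < k, M ≤ (z i).natAbs := by
    by_contra hcon
    push Not at hcon
    have := NN_le M k M (y := z) (fun i hi => (hcon i hi).le)
    linarith
  obtain ⟨lam, hlam, h⟩ := hε (fun j => (z j : ℝ) / ph M (z j)) (by
      rw [pi_norm_le_iff_of_nonneg zero_le_one]
      intro j
      rw [Real.norm_eq_abs, abs_div, abs_of_pos (hp _), div_le_one (hp _)]
      exact abs_le_ph _ _) (by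
      refine le_trans ?_ (norm_le_pi_norm _ (⟨i, hik⟩ : Fin k))
      rw [Real.norm_eq_abs, abs_div, abs_of_pos (hp _), le_div_iff₀ (hp _)]
      have h1 := ph_le M (z i)
      have h2 : (M : ℤ) ≤ |z i| := by rw [Int.abs_eq_natAbs]; exact_mod_cast hi
      have h3 : (M : ℝ) ≤ |(z i : ℝ)| := by exact_mod_cast h2
      simp only
      linarith)
  refine ⟨lam, hlam, fun v hv => ?_⟩
  have h1 := h v hv
  have h2 : ∑ j : Fin k, (z j : ℝ) / ph M (z j) * (v j : ℝ)
      = ∑ j ∈ Finset.range k, (z j : ℝ) / ph M (z j) * (ext v j : ℝ) := by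
    rw [← Fin.sum_univ_eq_sum_range (fun j => (z j : ℝ) / ph M (z j) * (ext v j : ℝ))]
    simp [ext_fin]
  rw [h2] at h1
  have h3 : NN M k (fun i => z i - ext v i) ≤ ∑ j ∈ Finset.range k,
      (ph M (z j) - (z j : ℝ) / ph M (z j) * (ext v j : ℝ) + (D : ℝ) ^ 2 / (2 * M)) := by
    apply Finset.sum_le_sum
    intro j hj
    refine (ph_sub M hM (z j) (ext v j)).trans ?_
    have h4 : |ext v j| ≤ (D : ℤ) := by
      have : (ext v j).natAbs ≤ D := by
        simp only [Finset.mem_range] at hj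
        simp only [ext, hj, dif_pos]
        exact hD lam hlam v hv _
      exact abs_le.2 ⟨by omega, by omega⟩
    have h5 : |(ext v j : ℝ)| ≤ D := by exact_mod_cast h4
    have h6 : (ext v j : ℝ) ^ 2 ≤ (D : ℝ) ^ 2 := by
      rw [← sq_abs]; gcongr
    gcongr
  rw [Finset.sum_add_distrib, Finset.sum_sub_distrib] at h3
  have h7 : ∑ j ∈ Finset.range k, (D : ℝ) ^ 2 / (2 * M) ≤ ε / 2 := by
    simp only [Finset.sum_const, Finset.card_range, nsmul_eq_mul]
    rw [← mul_div_assoc, div_le_div_iff₀ (by positivity) (by positivity)]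
    linarith
  have h8 : ∑ j ∈ Finset.range k, ph M (z j) = NN M k z := rfl
  linarith

section main
variable {G : Type*} [Group G] {R : Set G} {ι : Type*} {A : ι → G} {T : ℕ → G} {k : ℕ}

theorem flip {x h U : G} {c : ℝ} (H : Ar R (pcomm x (cj h U)) c) :
    Ar R (pcomm h (cj x U⁻¹)) c :=
  pcomm_symm (pcomm_conj U⁻¹ (by simpa using H))

theorem W_rev (T : ℕ → G) (x : ℕ → ℤ) :
    W (fun i => T (k - 1 - i)) x k = (W T (fun i => - x (k - 1 - i)) k)⁻¹ := by
  rw [W_inv]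
  apply W_congr
  intro i hi
  rw [neg_neg]; congr 1; omega

theorem mainInd (Lp Lm : Finset ((Fin k → ℤ) →₀ ℤ)) (hT : HT R A T k)
    (ε δ S K r₁ : ℝ) (D M B : ℕ) (hM : 1 ≤ M) (hB : B = M + 1)
    (hε : ∀ x : Fin k → ℝ, ‖x‖ ≤ 1 → 1 / 2 ≤ ‖x‖ →
      ∃ lam ∈ Lp ∪ Lm, ∀ v ∈ lam.support, ε ≤ ∑ i, x i * (v i : ℝ))
    (hD : ∀ lam ∈ Lp ∪ Lm, ∀ v ∈ lam.support, ∀ i, (v i).natAbs ≤ D)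
    (hS : ∀ lam ∈ Lp ∪ Lm, ∑ v ∈ lam.support, |(lam v : ℝ)| ≤ S)
    (hMD : (k : ℝ) * D ^ 2 ≤ M * ε) (hδ0 : 0 < δ) (hδ : δ ≤ 1 / 4) (hδε : δ ≤ ε / 2)
    (hK : 16 ≤ K)
    (hKC : 2 + S * (10 * (k * ((B + D : ℕ) * (k * (3 * (M + 2))))) + 1) ≤ K ^ δ)
    (hr₁ : r₁ = (k : ℝ) * (M + (3 * (B + D) : ℕ)) + 1)
    (hbase : ∀ a b x, NN M k x ≤ r₁ → Ar R (pcomm (A a) (cj (A b) (W T x k))) 1)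
    (hLp : ∀ a, ∀ lam ∈ Lp, Rel R (A a)
      ((lam.support.toList.map fun v => cj (A a ^ lam v) (W T (ext v) k)).prod) 1)
    (hLm : ∀ a, ∀ lam ∈ Lm, Rel R (A a)
      ((lam.support.toList.map fun v => cj (A a ^ lam v) (W T (ext v) k)⁻¹).prod) 1)
    (a b : ι) (x : ℕ → ℤ) :
    Ar R (pcomm (A a) (cj (A b) (W T x k))) (K ^ NN M k x) := by
  have hK0 : 0 < K := by linarith
  have hK1 : 1 ≤ K := by linarith
  have key : ∀ n : ℕ, Hyp R A T M k K (r₁ + n * δ) := by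
    intro n
    induction n with
    | zero =>
      intro a b x hx
      exact (hbase a b x (by simpa using hx)).mono (Real.one_le_rpow hK1 (NN_nonneg _ _ _))
    | succ n ih =>
      intro a b z hz
      rcases le_or_gt (NN M k z) r₁ with hle | hgt
      · exact (hbase a b z hle).mono (Real.one_le_rpow hK1 (NN_nonneg _ _ _))
      have hyp : Hyp R A T M k K (NN M k z - δ) := by
        intro a b x hx
        refine ih a b x ?_
        push_cast at hz
        linarith
      have hdec := decrease (Lp ∪ Lm) ε D M hM hε hD hMD z (by
        have h0 : (k : ℝ) * (M + M) ≤ (k : ℝ) * (M + (3 * (B + D) : ℕ)) := by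
          have : (M : ℝ) ≤ (3 * (B + D) : ℕ) := by
            have : M ≤ 3 * (B + D) := by omega
            exact_mod_cast this
          gcongr
        linarith)
      obtain ⟨lam, hlam, hv⟩ := hdec
      have hDext : ∀ v ∈ lam.support, ∀ j, (ext v j).natAbs ≤ D := by
        intro v hv j
        unfold ext
        split_ifs with h
        · exact hD lam hlam v hv _
        · simp
      have hSl : (lam.support.toList.map fun v => |(lam v : ℝ)|).sum ≤ S := by
        have := hS lam hlam
        rwa [← Finset.sum_map_toList] at this
      have hfinal : ∀ w, Ar R w ((2 + S * (10 * (k * ((B + D : ℕ) * (k * (3 * (M + 2))))) + 1))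
          * K ^ (NN M k z - δ)) → Ar R w (K ^ NN M k z) := by
        intro w hw
        refine hw.mono ?_
        calc _ ≤ K ^ δ * K ^ (NN M k z - δ) := by gcongr
          _ = K ^ NN M k z := by rw [← Real.rpow_add hK0]; congr 1; ring
      apply hfinal
      rcases Finset.mem_union.1 hlam with hp | hm
      · refine step hK hT B D hB S z δ hδ hyp (by linarith) a b
          (lam.support.toList.map fun v => (ext v, lam v)) ?_ ?_ ?_
        · rw [List.map_map]
          exact hLp a lam hp
        · rw [List.map_map]
          exact hSl
        · intro p hp
          simp only [List.mem_map, Finset.mem_toList] at hp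
          obtain ⟨v, hvs, rfl⟩ := hp
          exact ⟨hDext v hvs, (hv v hvs).trans (by linarith)⟩
      · have hrevz := NN_rev M k z
        have hT' : HT R A (fun i => T (k - 1 - i)) k := by
          intro i j hi hj hij
          exact hT (k - 1 - i) (k - 1 - j) (by omega) (by omega) (by omega)
        have hyp' : Hyp R A (fun i => T (k - 1 - i)) M k K
            (NN M k (fun i => - z (k - 1 - i)) - δ) := by
          intro a b x hx
          rw [hrevz] at hx
          rw [W_rev]
          apply flip
          rw [← NN_rev M k x] at hx ⊢
          exact hyp b a _ hx
        have hst := step hK hT' B D hB S (fun i => - z (k - 1 - i)) δ hδ hyp'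
          (by rw [hrevz]; linarith) b a
          (lam.support.toList.map fun v => (fun i => - ext v (k - 1 - i), lam v)) ?_ ?_ ?_
        · rw [hrevz, ← W_inv] at hst
          have := flip hst
          rwa [inv_inv] at this
        · rw [List.map_map]
          have := hLm b lam hm
          simp only [W_inv] at this
          exact this
        · rw [List.map_map]
          exact hSl
        · intro p hp
          simp only [List.mem_map, Finset.mem_toList] at hp
          obtain ⟨v, hvs, rfl⟩ := hp
          refine ⟨fun j => by simpa using hDext v hvs _, ?_⟩
          rw [hrevz]
          have h1 := NN_rev M k (fun i => z i - ext v i)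
          have h2 : (fun i => - z (k - 1 - i) - - ext v (k - 1 - i))
              = fun i => - (z (k - 1 - i) - ext v (k - 1 - i)) := by funext i; ring
          simp only at h1 ⊢
          rw [h2, h1]
          exact (hv v hvs).trans (by linarith)
  obtain ⟨n, hn⟩ := exists_nat_ge ((NN M k x - r₁) / δ)
  rw [div_le_iff₀ hδ0] at hn
  exact key n a b x (by linarith)

end main

def TT (m k : ℕ) : ℕ → FreeGroup (Fin m ⊕ Fin k) := fun i => if h : i < k then tgen ⟨i, h⟩ else 1

theorem ofFn_prod {G : Type*} [Group G] (f : ℕ → G) (k : ℕ) :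
    (List.ofFn fun i : Fin k => f i).prod = ((List.range k).map f).prod := by
  rw [List.ofFn_eq_map, ← List.map_coe_finRange_eq_range, List.map_map]
  rfl

theorem ow_eq {m k : ℕ} (x : ℕ → ℤ) :
    (ow (fun i : Fin k => x i) : FreeGroup (Fin m ⊕ Fin k)) = W (TT m k) x k := by
  unfold ow W
  rw [← ofFn_prod]
  congr 2
  funext i
  simp [TT]

theorem ow_ext {m k : ℕ} (v : Fin k → ℤ) :
    (ow v : FreeGroup (Fin m ⊕ Fin k)) = W (TT m k) (ext v) k := by
  rw [← ow_eq]
  simp [ext_fin]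

theorem normV_le (M : ℕ) {k : ℕ} (x : ℕ → ℤ) : normV (fun i : Fin k => x i) ≤ NN M k x := by
  unfold normV
  apply Real.sqrt_le_iff.2
  refine ⟨NN_nonneg _ _ _, ?_⟩
  unfold NN
  rw [← Fin.sum_univ_eq_sum_range (fun j => ph M (x j))]
  calc ∑ i : Fin k, ((x i : ℤ) : ℝ) ^ 2 ≤ ∑ i : Fin k, ph M (x i) ^ 2 := by
        apply Finset.sum_le_sum
        intro i _
        rw [ph_sq]; nlinarith [sq_nonneg (M : ℝ)]
    _ ≤ _ := Finset.sum_sq_le_sq_sum_of_nonneg (fun i _ => ph_nonneg _ _)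

theorem le_normV {k : ℕ} (v : Fin k → ℤ) (i : Fin k) : |(v i : ℝ)| ≤ normV v := by
  apply Real.abs_le_sqrt
  exact Finset.single_le_sum (f := fun i => ((v i : ℤ) : ℝ) ^ 2) (fun i _ => sq_nonneg _)
    (Finset.mem_univ i)

end CAB
/-- Uniform exponential area bound for the commutation relations
`[a, b^u]` in the groups `H(ρ, ℛ)`, independent of the finite relator set `ℛ`. -/
theorem commutation_area_bound (k : ℕ) (hk : 1 ≤ k)
    (Lp Lm : Finset ((Fin k → ℤ) →₀ ℤ)) (htame : TameCond Lp Lm) :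
    ∃ ρ₀ : ℝ, 0 < ρ₀ ∧ ∀ ρ : ℝ, ρ₀ ≤ ρ →
      ∀ (m : ℕ), 1 ≤ m → ∀ aij : Fin k → Fin k → Fin m,
        ∃ K : ℝ, 1 < K ∧ ∀ Rx : Set (FreeGroup (Fin m ⊕ Fin k)), Rx.Finite →
          ∀ (a b : Fin m) (n : ℕ) (v : Fin k → ℤ), normV v < n →
            pcomm (agen a) ((ow v)⁻¹ * agen b * ow v) ∈
              Subgroup.normalClosure (HRel aij Lp Lm ρ Rx) ∧
            ∃ N : ℕ, (N : ℝ) ≤ K ^ n ∧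
              AreaLe (HRel aij Lp Lm ρ Rx) (pcomm (agen a) ((ow v)⁻¹ * agen b * ow v)) N := by
  classical
  obtain ⟨ε, hε0, hε⟩ := CAB.tameEps Lp Lm htame
  obtain ⟨D, hD⟩ : ∃ D : ℕ, ∀ lam ∈ Lp ∪ Lm, ∀ v ∈ lam.support, ∀ i, (v i).natAbs ≤ D := by
    refine ⟨∑ lam ∈ Lp ∪ Lm, ∑ v ∈ lam.support, ∑ i, (v i).natAbs, ?_⟩
    intro lam hlam v hv i
    calc (v i).natAbs ≤ ∑ i, (v i).natAbs :=
          Finset.single_le_sum (f := fun i => (v i).natAbs) (fun _ _ => Nat.zero_le _)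
            (Finset.mem_univ i)
      _ ≤ ∑ v ∈ lam.support, ∑ i, (v i).natAbs :=
          Finset.single_le_sum (f := fun v : Fin k → ℤ => ∑ i, (v i).natAbs)
            (fun _ _ => Nat.zero_le _) hv
      _ ≤ _ := Finset.single_le_sum
            (f := fun lam : (Fin k → ℤ) →₀ ℤ => ∑ v ∈ lam.support, ∑ i, (v i).natAbs)
            (fun _ _ => Nat.zero_le _) hlam
  obtain ⟨S, hS0, hS⟩ : ∃ S : ℝ, 0 ≤ S ∧
      ∀ lam ∈ Lp ∪ Lm, ∑ v ∈ lam.support, |(lam v : ℝ)| ≤ S := by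
    refine ⟨∑ lam ∈ Lp ∪ Lm, ∑ v ∈ lam.support, |(lam v : ℝ)|, by positivity, ?_⟩
    intro lam hlam
    exact Finset.single_le_sum
      (f := fun lam : (Fin k → ℤ) →₀ ℤ => ∑ v ∈ lam.support, |(lam v : ℝ)|)
      (fun _ _ => by positivity) hlam
  obtain ⟨M, hM, hMD⟩ : ∃ M : ℕ, 1 ≤ M ∧ (k : ℝ) * D ^ 2 ≤ M * ε := by
    obtain ⟨M, h⟩ := exists_nat_ge ((k : ℝ) * D ^ 2 / ε)
    rw [div_le_iff₀ hε0] at h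
    refine ⟨M + 1, by omega, ?_⟩
    push_cast
    linarith
  obtain ⟨δ, hδ0, hδ, hδε⟩ : ∃ δ : ℝ, 0 < δ ∧ δ ≤ 1 / 4 ∧ δ ≤ ε / 2 :=
    ⟨min (1 / 4) (ε / 2), lt_min (by norm_num) (by linarith), min_le_left _ _, min_le_right _ _⟩
  set B := M + 1 with hB
  set C : ℝ := 2 + S * (10 * (k * ((B + D : ℕ) * (k * (3 * (M + 2))))) + 1) with hC
  have hC0 : 0 ≤ C := by positivity
  obtain ⟨K, hK, hKC⟩ : ∃ K : ℝ, 16 ≤ K ∧ C ≤ K ^ δ := by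
    refine ⟨max 16 (C ^ (1 / δ)), le_max_left _ _, ?_⟩
    calc C = (C ^ (1 / δ)) ^ δ := by
          rw [← Real.rpow_mul hC0, one_div_mul_cancel hδ0.ne', Real.rpow_one]
      _ ≤ _ := Real.rpow_le_rpow (by positivity) (le_max_right _ _) hδ0.le
  set r₁ : ℝ := (k : ℝ) * (M + (3 * (B + D) : ℕ)) + 1 with hr₁
  have hr₁0 : 0 < r₁ := by positivity
  refine ⟨r₁ + 1, by linarith, ?_⟩
  intro ρ hρ m hm aij
  have hkR : (1 : ℝ) ≤ k := by exact_mod_cast hk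
  refine ⟨K ^ ((k : ℝ) * (M + 1)), Real.one_lt_rpow (by linarith) (by positivity), ?_⟩
  intro Rx _ a b n v hv
  set R := HRel aij Lp Lm ρ Rx with hR
  have hT : CAB.HT R (fun i : Fin m => (agen i : FreeGroup (Fin m ⊕ Fin k))) (CAB.TT m k) k := by
    have aux : ∀ i j (hi : i < k) (hj : j < k), i < j →
        CAB.Rel R (CAB.TT m k i * CAB.TT m k j)
          (CAB.TT m k j * CAB.TT m k i * agen (aij ⟨i, hi⟩ ⟨j, hj⟩)) 1 := by
      intro i j hi hj hij
      have hmem : pcomm (tgen ⟨i, hi⟩) (tgen ⟨j, hj⟩) * (agen (aij ⟨i, hi⟩ ⟨j, hj⟩))⁻¹ ∈ R :=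
        Or.inl ⟨⟨i, hi⟩, ⟨j, hj⟩, hij, rfl⟩
      have h1 := (CAB.Ar.rel hmem).conj (tgen ⟨j, hj⟩ * tgen ⟨i, hi⟩)⁻¹
      unfold CAB.Rel
      convert h1 using 1
      simp only [CAB.TT, hi, hj, dif_pos, pcomm]
      group
    intro i j hi hj hij
    rcases lt_or_gt_of_ne hij with h | h
    · exact ⟨_, ⟨_, Or.inl rfl⟩, aux i j hi hj h⟩
    · refine ⟨_, ⟨aij ⟨j, hj⟩ ⟨i, hi⟩, Or.inr rfl⟩, ?_⟩
      have h1 := ((aux j i hj hi h).mul_right (agen (aij ⟨j, hj⟩ ⟨i, hi⟩))⁻¹).symm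
      simpa [mul_assoc] using h1
  have hmain := CAB.mainInd (R := R) (A := fun i : Fin m => (agen i : FreeGroup (Fin m ⊕ Fin k)))
    (T := CAB.TT m k) Lp Lm hT ε δ S K r₁ D M B hM hB hε hD hS hMD hδ0 hδ hδε hK hKC hr₁
    (by
      intro a b x hx
      rw [← CAB.ow_eq]
      apply CAB.Ar.rel
      refine Or.inr (Or.inl ⟨a, b, fun i => x i, ?_, rfl⟩)
      have := CAB.normV_le M (k := k) x
      linarith)
    (by
      intro a lam hlam
      have hmem : lamWordP a lam ∈ R := Or.inr (Or.inr (Or.inl ⟨a, lam, hlam, rfl⟩))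
      have h1 : CAB.Rel R _ (agen a) 1 := CAB.Ar.rel hmem
      simp only [← CAB.ow_ext]
      exact h1.symm)
    (by
      intro a lam hlam
      have hmem : lamWordM a lam ∈ R := Or.inr (Or.inr (Or.inr (Or.inl ⟨a, lam, hlam, rfl⟩)))
      have h1 : CAB.Rel R _ (agen a) 1 := CAB.Ar.rel hmem
      simp only [← CAB.ow_ext, CAB.cj, inv_inv]
      exact h1.symm)
    a b (CAB.ext v)
  rw [← CAB.ow_ext] at hmain
  obtain ⟨N, hN, hle⟩ := hmain
  refine ⟨hN.mem, N, ?_, N, le_rfl, hN.areaIs⟩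
  refine hle.trans ?_
  have hv0 : 0 ≤ normV v := Real.sqrt_nonneg _
  have hn1 : (1 : ℝ) ≤ n := by
    have : (0 : ℝ) < n := lt_of_le_of_lt hv0 hv
    have : 0 < n := by exact_mod_cast this
    exact_mod_cast this
  rw [← Real.rpow_natCast, ← Real.rpow_mul (by linarith)]
  apply Real.rpow_le_rpow_of_exponent_le (by linarith)
  have h1 : CAB.NN M k (CAB.ext v) ≤ k * (M + n) := by
    apply CAB.NN_le
    intro i hi
    have h2 := CAB.le_normV v ⟨i, hi⟩
    have h3 : |(v ⟨i, hi⟩ : ℝ)| ≤ n := by linarith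
    have h4 : |v ⟨i, hi⟩| ≤ (n : ℤ) := by exact_mod_cast h3
    simp only [CAB.ext, hi, dif_pos]
    have := abs_le.1 h4
    omega
  have hM0 : (0 : ℝ) ≤ M := by positivity
  have h2 : (M : ℝ) + n ≤ (M + 1) * n := by nlinarith
  calc _ ≤ (k : ℝ) * (M + n) := h1
    _ ≤ k * ((M + 1) * n) := by gcongr
    _ = _ := by ring
end

section
/- Let 𝓕 be a finite collection of finite nonempty subsets of ℝ^n such that for every nonzero x ∈ ℝ^n there exists L ∈ 𝓕 with ⟨x, y⟩ > 0 for all y ∈ L. Then there exist a radius r₀ > 0 and a function ε : (r₀, ∞) → ℝ_{>0} such that for every r > r₀ and every x in the open ball B_{r+ε(r)} of radius r + ε(r) centered at 0, either x ∈ B_r or there exists L ∈ 𝓕 with x + L = {x + y : y ∈ L} ⊆ B_r. -/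
/-- (Bieri–Strebel geometric lemma.) If `𝓕` is a finite collection of
finite nonempty subsets of `ℝⁿ` such that every nonzero `x` has some `L ∈ 𝓕` with
`⟨x,y⟩ > 0` for all `y ∈ L`, then there are `r₀ > 0` and `ε : (r₀,∞) → ℝ_{>0}` such that
for `r > r₀` every element of `B_{r+ε(r)}` can be taken from `B_r` by `𝓕`. -/
theorem geometric_lemma {n : ℕ} (F : Finset (Finset (EuclideanSpace ℝ (Fin n))))
    (hne : ∀ L ∈ F, L.Nonempty)
    (hpos : ∀ x : EuclideanSpace ℝ (Fin n), x ≠ 0 →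
      ∃ L ∈ F, ∀ y ∈ L, 0 < (inner ℝ x y : ℝ)) :
    ∃ r₀ : ℝ, 0 < r₀ ∧ ∃ ε : ℝ → ℝ, (∀ r, r₀ < r → 0 < ε r) ∧
      ∀ r, r₀ < r → ∀ x : EuclideanSpace ℝ (Fin n), ‖x‖ < r + ε r →
        ‖x‖ < r ∨ ∃ L ∈ F, ∀ y ∈ L, ‖x + y‖ < r := by
  have hc : ∃ c : ℝ, 0 < c ∧ ∀ x ∈ Metric.sphere (0 : EuclideanSpace ℝ (Fin n)) 1,
      ∃ L ∈ F, ∀ y ∈ L, c < (inner ℝ x y : ℝ) := by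
    refine IsCompact.induction_on (p := fun s => ∃ c : ℝ, 0 < c ∧ ∀ x ∈ s,
      ∃ L ∈ F, ∀ y ∈ L, c < (inner ℝ x y : ℝ))
      (isCompact_sphere (0 : EuclideanSpace ℝ (Fin n)) 1) ?_ ?_ ?_ ?_
    · exact ⟨1, one_pos, by simp⟩
    · rintro s t hst ⟨c, hc, h⟩
      exact ⟨c, hc, fun x hx => h x (hst hx)⟩
    · rintro s t ⟨c, hc, h⟩ ⟨d, hd, h'⟩
      refine ⟨min c d, lt_min hc hd, ?_⟩
      rintro x (hx | hx)
      · obtain ⟨L, hL, hy⟩ := h x hx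
        exact ⟨L, hL, fun y hyL => (min_le_left _ _).trans_lt (hy y hyL)⟩
      · obtain ⟨L, hL, hy⟩ := h' x hx
        exact ⟨L, hL, fun y hyL => (min_le_right _ _).trans_lt (hy y hyL)⟩
    · intro x hx
      have hx0 : x ≠ 0 := by
        rintro rfl
        simp at hx
      obtain ⟨L, hL, hy⟩ := hpos x hx0
      have h1 : ∀ᶠ c : ℝ in nhdsWithin 0 (Set.Ioi 0), ∀ y ∈ L, c < (inner ℝ x y : ℝ) := by
        rw [Filter.eventually_all_finset]
        intro y hyL
        exact nhdsWithin_le_nhds (Iio_mem_nhds (hy y hyL))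
      obtain ⟨c, hc, hc0⟩ := (h1.and self_mem_nhdsWithin).exists
      have h2 : ∀ᶠ z in nhds x, ∀ y ∈ L, c < (inner ℝ z y : ℝ) := by
        rw [Filter.eventually_all_finset]
        intro y hyL
        have hcont : Continuous fun z : EuclideanSpace ℝ (Fin n) => (inner ℝ z y : ℝ) := by
          fun_prop
        exact hcont.continuousAt.eventually_const_lt (hc y hyL)
      exact ⟨_, nhdsWithin_le_nhds h2, c, hc0, fun z hz => ⟨L, hL, hz⟩⟩
  obtain ⟨c, hc, hcF⟩ := hc
  obtain ⟨M, hM0, hM⟩ : ∃ M : ℝ, 0 ≤ M ∧ ∀ L ∈ F, ∀ y ∈ L, ‖y‖ ^ 2 ≤ M := by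
    refine ⟨∑ L ∈ F, ∑ y ∈ L, ‖y‖ ^ 2, by positivity, fun L hL y hy => ?_⟩
    calc ‖y‖ ^ 2 ≤ ∑ y ∈ L, ‖y‖ ^ 2 :=
          Finset.single_le_sum (f := fun y => ‖y‖ ^ 2) (fun _ _ => by positivity) hy
      _ ≤ _ := Finset.single_le_sum (f := fun L => ∑ y ∈ L, ‖y‖ ^ 2)
          (fun _ _ => by positivity) hL
  refine ⟨c + M / c, by positivity, fun _ => c / 2, fun _ _ => by positivity, ?_⟩
  intro r hr x hx
  rw [or_iff_not_imp_left, not_lt]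
  intro hrx
  have hMc : 0 ≤ M / c := by positivity
  have hrc : c < r := by linarith
  have hs : 0 < ‖x‖ := by linarith
  obtain ⟨L, hL, hy⟩ := hcF (-(‖x‖⁻¹ • x)) (by
    simp [norm_smul, hs.ne'])
  refine ⟨L, hL, fun y hyL => ?_⟩
  have h1 := hy y hyL
  rw [inner_neg_left, real_inner_smul_left] at h1
  have h2 : (inner ℝ x y : ℝ) < - (c * ‖x‖) := by
    have := mul_lt_mul_of_pos_right h1 hs
    have h3 : -(‖x‖⁻¹ * (inner ℝ x y : ℝ)) * ‖x‖ = - inner ℝ x y := by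
      field_simp
    linarith
  have h4 := hM L hL y hyL
  have h5 : M < c * r := by
    have : M / c < r := by linarith
    rw [div_lt_iff₀ hc] at this
    linarith
  have h6 : (‖x‖ - c) ^ 2 ≤ (r - c / 2) ^ 2 :=
    pow_le_pow_left₀ (by linarith) (by linarith) 2
  refine lt_of_pow_lt_pow_left₀ 2 (by linarith) ?_
  rw [norm_add_sq_real]
  nlinarith
end
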